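/- arXiv:1102.5255 — 2 statements merged into one kernel-verified Lean document; each statement's English description precedes it below -/
import Mathlib

section
/- Let U₁,…,U_N be as in the context. Then the derivative of the determinant of W satisfies (d/dx) det W(U₁,…,U_M;U_{M+1},…,U_N) = Σ_{l=1}^n det W_{l,l}(U₁,…,U_M;U_{M+1},…,U_N). -/
open Matrix

noncomputable section

namespace SingularDarboux

variable {n : ℕ}

/-- Entrywise derivative `∂` of a matrix-valued function. -/
def matD (U : ℝ → Matrix (Fin n) (Fin n) ℝ) : ℝ → Matrix (Fin n) (Fin n) ℝ :=
  fun x => Matrix.of fun i j => deriv (fun t => U t i j) x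

/-- The operator `D_m` acting on matrix-valued functions: it differentiates the
first `m` rows and keeps the remaining rows unchanged. -/
def matDm (m : ℕ) (U : ℝ → Matrix (Fin n) (Fin n) ℝ) : ℝ → Matrix (Fin n) (Fin n) ℝ :=
  fun x => Matrix.of fun i j => if (i : ℕ) < m then deriv (fun t => U t i j) x else U x i j

/-- Entrywise derivative `∂` of a vector-valued function. -/
def vecD (Ψ : ℝ → Fin n → ℝ) : ℝ → Fin n → ℝ := fun x i => deriv (fun t => Ψ t i) x

/-- The operator `D_m` (equivalently `∂^{(m)}`) acting on vector-valued functions: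
it differentiates the first `m` components and keeps the remaining ones unchanged. -/
def vecDm (m : ℕ) (Ψ : ℝ → Fin n → ℝ) : ℝ → Fin n → ℝ :=
  fun x i => if (i : ℕ) < m then deriv (fun t => Ψ t i) x else Ψ x i

/-- All entries of the matrix-valued function are smooth. -/
def SmoothMat (U : ℝ → Matrix (Fin n) (Fin n) ℝ) : Prop :=
  ∀ i j, ContDiff ℝ (⊤ : ℕ∞) fun x => U x i j

/-- All components of the vector-valued function are smooth. -/
def SmoothVec (Ψ : ℝ → Fin n → ℝ) : Prop := ∀ i, ContDiff ℝ (⊤ : ℕ∞) fun x => Ψ x i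

/-- `U = diag(Ũ, I_{n-m})`: outside of the top-left `m × m` block, `U` coincides with
the identity matrix. -/
def BlockDiag (m : ℕ) (U : ℝ → Matrix (Fin n) (Fin n) ℝ) : Prop :=
  ∀ (x : ℝ) (i j : Fin n), (m ≤ (i : ℕ) ∨ m ≤ (j : ℕ)) → U x i j = if i = j then 1 else 0

/-- The `(r,k)` block (`r,k` $0$-indexed) of the matrix `W(U₁,…,U_M;U_{M+1},…,U_N)`. -/
def Wblock (m M r k : ℕ) (U : ℝ → Matrix (Fin n) (Fin n) ℝ) : ℝ → Matrix (Fin n) (Fin n) ℝ :=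
  if k < M then (if r ≤ k then (matDm m)^[r] U else matD^[r] U)
  else (if r < M then (matDm m)^[r] U else matD^[r - M] ((matDm m)^[M] U))

/-- The `r`-th block of the column appended on the right in `W_j`. -/
def Wcol (m M r : ℕ) (Ψ : ℝ → Fin n → ℝ) : ℝ → Fin n → ℝ :=
  if r < M then (vecDm m)^[r] Ψ else vecD^[r - M] ((vecDm m)^[M] Ψ)

/-- The `i`-th row of the `k`-th block of the row appended at the bottom in `W_j`
(also the replacement row used in `W_{i,j}`). -/
def Wrow (m M N k : ℕ) (U : ℝ → Matrix (Fin n) (Fin n) ℝ) (i : Fin n) : ℝ → Fin n → ℝ :=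
  if k < M then (fun x => matD^[N] U x i) else (fun x => matD^[N - M] ((matDm m)^[M] U) x i)

/-- The `nN × nN` matrix `W(U₁,…,U_M;U_{M+1},…,U_N)`; rows are indexed by pairs
(block-row `r`, row `i` within the block) and similarly for columns. -/
def Wmat (m M N : ℕ) (U : ℕ → ℝ → Matrix (Fin n) (Fin n) ℝ) (x : ℝ) :
    Matrix (Fin N × Fin n) (Fin N × Fin n) ℝ :=
  Matrix.of fun p q => Wblock m M (p.1 : ℕ) (q.1 : ℕ) (U (q.1 : ℕ)) x p.2 q.2

/-- The `(nN+1) × (nN+1)` matrix `W_j(U₁,…,U_M;U_{M+1},…,U_N,Ψ)`. -/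
def WjMat (m M N : ℕ) (j : Fin n) (U : ℕ → ℝ → Matrix (Fin n) (Fin n) ℝ)
    (Ψ : ℝ → Fin n → ℝ) (x : ℝ) :
    Matrix ((Fin N × Fin n) ⊕ Unit) ((Fin N × Fin n) ⊕ Unit) ℝ :=
  Matrix.of fun p q =>
    match p, q with
    | Sum.inl p, Sum.inl q => Wblock m M (p.1 : ℕ) (q.1 : ℕ) (U (q.1 : ℕ)) x p.2 q.2
    | Sum.inl p, Sum.inr _ => Wcol m M (p.1 : ℕ) Ψ x p.2
    | Sum.inr _, Sum.inl q => Wrow m M N (q.1 : ℕ) (U (q.1 : ℕ)) j x q.2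
    | Sum.inr _, Sum.inr _ => vecD^[N - M] ((vecDm m)^[M] Ψ) x j

/-- The `nN × nN` matrix `W_{i,j}(U₁,…,U_M;U_{M+1},…,U_N)`: in the last block-row
(`r = N-1`) of `W` the `j`-th row of each block is replaced as prescribed. -/
def WijMat (m M N : ℕ) (i j : Fin n) (U : ℕ → ℝ → Matrix (Fin n) (Fin n) ℝ) (x : ℝ) :
    Matrix (Fin N × Fin n) (Fin N × Fin n) ℝ :=
  Matrix.of fun p q =>
    if (p.1 : ℕ) = N - 1 ∧ p.2 = j then Wrow m M N (q.1 : ℕ) (U (q.1 : ℕ)) i x q.2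
    else Wblock m M (p.1 : ℕ) (q.1 : ℕ) (U (q.1 : ℕ)) x p.2 q.2

/-!
Row by row, `(det W)' = ∑ p, det (W with row p differentiated)`, and only the rows `p = (N - 1, l)`
contribute. The derivative of row `(r, i)` is row `(r + 1, i)` as soon as `i < m` or `M ≤ r`, so for
`r + 1 < N` the determinant has two equal rows. For `m ≤ i` and `r < M`, the column `(r, i)` of `W`
is constant and equal to the sum of the unit vectors `e (s, i)` with `s ≤ r`. Once row `(r, i)` has
been differentiated, its entries in such columns vanish, so column `(r, i)` coincides with column
`(r - 1, i)`, or is zero when `r = 0`.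
-/

section DerivRow

variable {𝕜 𝔸 ι : Type*} [NontriviallyNormedField 𝕜] [NormedCommRing 𝔸] [NormedAlgebra 𝕜 𝔸]
  [DecidableEq ι]

/-- The value at `x` of the matrix-valued function `A`, with row `p` replaced by its entrywise
derivative. These are the matrices in the row expansion of the derivative of `det A`. -/
def derivRow (A : 𝕜 → Matrix ι ι 𝔸) (p : ι) (x : 𝕜) : Matrix ι ι 𝔸 :=
  (A x).updateRow p fun q => deriv (fun t => A t p q) x

theorem derivRow_self (A : 𝕜 → Matrix ι ι 𝔸) (p q : ι) (x : 𝕜) :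
    derivRow A p x p q = deriv (fun t => A t p q) x := by
  rw [derivRow, updateRow_self]

theorem derivRow_of_ne (A : 𝕜 → Matrix ι ι 𝔸) {p p' : ι} (h : p' ≠ p) (q : ι) (x : 𝕜) :
    derivRow A p x p' q = A x p' q := by
  rw [derivRow, updateRow_ne h]

theorem hasDerivAt_det [Fintype ι] {A : 𝕜 → Matrix ι ι 𝔸} {x : 𝕜}
    (hA : ∀ p q, DifferentiableAt 𝕜 (fun t => A t p q) x) :
    HasDerivAt (fun t => (A t).det) (∑ p, (derivRow A p x).det) x := by
  let detRow : ContinuousMultilinearMap 𝕜 (fun _ : ι => ι → 𝔸) 𝔸 :=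
    { (detRowAlternating : (ι → 𝔸) [⋀^ι]→ₗ[𝔸] 𝔸).toMultilinearMap.restrictScalars 𝕜 with
      cont := Continuous.matrix_det (A := fun B : ι → ι → 𝔸 => of B) continuous_id }
  have hrows : HasDerivAt (fun t => (A t : ι → ι → 𝔸)) (fun p q => deriv (fun t => A t p q) x) x :=
    hasDerivAt_pi.2 fun p => hasDerivAt_pi.2 fun q => (hA p q).hasDerivAt
  exact ((detRow.hasFDerivAt (A x)).comp_hasDerivAt x hrows).congr_deriv
    (detRow.linearDeriv_apply (A x) _)

end DerivRow

section Entries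

variable (m M r k : ℕ) (U : ℝ → Matrix (Fin n) (Fin n) ℝ) (i j : Fin n) (x : ℝ)

theorem matD_iterate_apply :
    matD^[r] U x i j = iteratedDeriv r (fun t => U t i j) x := by
  induction r generalizing x with
  | zero => rw [Function.iterate_zero_apply, iteratedDeriv_zero]
  | succ r ih => simp only [Function.iterate_succ_apply', iteratedDeriv_succ, matD, of_apply, ih]

theorem matDm_iterate_apply :
    (matDm m)^[r] U x i j = iteratedDeriv (if (i : ℕ) < m then r else 0) (fun t => U t i j) x := by
  induction r generalizing x with
  | zero => rw [Function.iterate_zero_apply, ite_self, iteratedDeriv_zero]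
  | succ r ih =>
    simp only [Function.iterate_succ_apply', matDm, of_apply, ih]
    split_ifs
    · rw [iteratedDeriv_succ]
    · rfl

/-- The order to which the entries of `U` are differentiated in row `i` of `Wblock m M r k U`. -/
def blockOrder (i : ℕ) : ℕ :=
  if i < m then r else if M ≤ k then r - M else if r ≤ k then 0 else r

theorem blockOrder_le (i : ℕ) : blockOrder m M r k i ≤ r := by
  unfold blockOrder
  grind

theorem Wblock_apply :
    Wblock m M r k U x i j = iteratedDeriv (blockOrder m M r k i) (fun t => U t i j) x := by
  unfold Wblock
  split_ifs <;>
    simp only [matD_iterate_apply, matDm_iterate_apply, iteratedDeriv_eq_iterate,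
      ← Function.iterate_add_apply] <;>
    grind [blockOrder]

theorem deriv_Wblock :
    deriv (fun t => Wblock m M r k U t i j) x =
      iteratedDeriv (blockOrder m M r k i + 1) (fun t => U t i j) x := by
  simp only [Wblock_apply, iteratedDeriv_succ]

variable {m M r k U i j x}

theorem differentiable_Wblock (hU : ContDiff ℝ (r + 1) fun t => U t i j) :
    Differentiable ℝ fun t => Wblock m M r k U t i j := by
  simp only [Wblock_apply]
  exact hU.differentiable_iteratedDeriv _
    (by exact_mod_cast Nat.lt_succ_of_le (blockOrder_le m M r k i))

theorem BlockDiag.iteratedDeriv_apply (hU : BlockDiag m U) (hij : m ≤ (i : ℕ) ∨ m ≤ (j : ℕ))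
    (s : ℕ) (x : ℝ) :
    iteratedDeriv s (fun t => U t i j) x =
      if s = 0 then (1 : Matrix (Fin n) (Fin n) ℝ) i j else 0 := by
  simp only [hU _ i j hij, iteratedDeriv_const, Matrix.one_apply]

theorem BlockDiag.Wblock_apply_of_le (hU : BlockDiag m U) (hk : k < M) (hj : m ≤ (j : ℕ)) (x : ℝ) :
    Wblock m M r k U x i j = if r ≤ k then (1 : Matrix (Fin n) (Fin n) ℝ) i j else 0 := by
  rw [Wblock_apply, hU.iteratedDeriv_apply (.inr hj)]
  obtain rfl | hij := eq_or_ne i j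
  · have horder : blockOrder m M r k i = 0 ↔ r ≤ k := by
      unfold blockOrder
      grind
    simp only [horder]
  · simp only [one_apply_ne hij, ite_self]

theorem deriv_Wblock_eq_succ (hU : k < M → BlockDiag m U) (h : (i : ℕ) < m ∨ min k M ≤ r) :
    deriv (fun t => Wblock m M r k U t i j) x = Wblock m M (r + 1) k U x i j := by
  rw [deriv_Wblock, Wblock_apply]
  by_cases hik : (i : ℕ) < m ∨ M ≤ k
  · have horder : blockOrder m M (r + 1) k i = blockOrder m M r k i + 1 := by
      unfold blockOrder
      grind
    rw [horder]
  · push Not at hik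
    have horder : blockOrder m M (r + 1) k i ≠ 0 := by
      unfold blockOrder
      grind
    simp only [(hU hik.2).iteratedDeriv_apply (.inl hik.1), horder, Nat.succ_ne_zero, if_false]

theorem Wrow_eq_Wblock {N : ℕ} (hk : k < N) : Wrow m M N k U i x = Wblock m M N k U x i := by
  unfold Wrow Wblock
  split_ifs <;> first | rfl | lia

end Entries

section Wronskian

variable {m M N : ℕ} {U : ℕ → ℝ → Matrix (Fin n) (Fin n) ℝ} {x : ℝ}

theorem differentiable_Wmat (hU : ∀ k < N, ∀ i j, ContDiff ℝ N fun t => U k t i j)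
    (p q : Fin N × Fin n) : Differentiable ℝ fun t => Wmat m M N U t p q :=
  differentiable_Wblock ((hU q.1 q.1.2 p.2 q.2).of_le (by exact_mod_cast p.1.2))

theorem derivRow_Wmat_last (hU : ∀ k < M, BlockDiag m (U k)) (l : Fin n) :
    derivRow (Wmat m M (N + 1) U) (Fin.last N, l) x = WijMat m M (N + 1) l l U x := by
  ext p q
  by_cases hp : p = (Fin.last N, l)
  · subst hp
    rw [derivRow_self]
    simp only [WijMat, of_apply, Fin.val_last, Nat.add_sub_cancel, and_self, if_true,
      Wrow_eq_Wblock q.1.2]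
    exact deriv_Wblock_eq_succ (hU _) (.inr ((min_le_left _ _).trans q.1.is_le))
  · have hp' : ¬((p.1 : ℕ) = N + 1 - 1 ∧ p.2 = l) := fun h => hp (Prod.ext (Fin.ext h.1) h.2)
    rw [derivRow_of_ne _ hp, WijMat, of_apply, if_neg hp', Wmat, of_apply]

theorem det_derivRow_Wmat_castSucc_eq_zero (hU : ∀ k < M, BlockDiag m (U k)) {r : Fin N}
    {i : Fin n} (h : (i : ℕ) < m ∨ M ≤ (r : ℕ)) :
    (derivRow (Wmat m M (N + 1) U) (r.castSucc, i) x).det = 0 := by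
  have hne : (r.succ, i) ≠ (r.castSucc, i) := fun h' =>
    r.castSucc_lt_succ.ne' (congrArg Prod.fst h')
  refine det_zero_of_row_eq hne.symm (funext fun q => ?_)
  rw [derivRow_self, derivRow_of_ne _ hne]
  exact deriv_Wblock_eq_succ (hU _) (h.imp_right (min_le_right _ _).trans)

theorem Wmat_apply_of_le (hU : ∀ k < M, BlockDiag m (U k)) {k : Fin N} {i : Fin n}
    (hk : (k : ℕ) < M) (hi : m ≤ (i : ℕ)) (p : Fin N × Fin n) (x : ℝ) :
    Wmat m M N U x p (k, i) = if p.1 ≤ k then (1 : Matrix (Fin n) (Fin n) ℝ) p.2 i else 0 :=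
  (hU k hk).Wblock_apply_of_le hk hi x

theorem derivRow_Wmat_apply_of_le (hU : ∀ k < M, BlockDiag m (U k)) {k r : Fin N} {i : Fin n}
    (hk : (k : ℕ) < M) (hi : m ≤ (i : ℕ)) (p : Fin N × Fin n) (x : ℝ) :
    derivRow (Wmat m M N U) (r, i) x p (k, i) =
      if p.1 ≤ k ∧ p.1 ≠ r then (1 : Matrix (Fin n) (Fin n) ℝ) p.2 i else 0 := by
  by_cases hp : p = (r, i)
  · simp only [hp, derivRow_self, Wmat_apply_of_le hU hk hi, deriv_const, ne_eq, not_true_eq_false,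
      and_false, if_false]
  · rw [derivRow_of_ne _ hp, Wmat_apply_of_le hU hk hi]
    obtain hpi | hpi := eq_or_ne p.2 i
    · have hpr : p.1 ≠ r := fun h => hp (Prod.ext h hpi)
      simp only [hpr, ne_eq, not_false_eq_true, and_true]
    · simp only [one_apply_ne hpi, ite_self]

theorem det_derivRow_Wmat_eq_zero_of_lt_of_le (hU : ∀ k < M, BlockDiag m (U k)) {r : Fin N}
    {i : Fin n} (hr : (r : ℕ) < M) (hi : m ≤ (i : ℕ)) :
    (derivRow (Wmat m M N U) (r, i) x).det = 0 := by
  by_cases hr₀ : (r : ℕ) = 0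
  · refine det_eq_zero_of_column_eq_zero (r, i) fun p => ?_
    rw [derivRow_Wmat_apply_of_le hU hr hi, if_neg]
    grind
  · let s : Fin N := ⟨r - 1, by lia⟩
    have hsr : (s : ℕ) + 1 = r := Nat.sub_add_cancel (Nat.pos_of_ne_zero hr₀)
    have hne : (s, i) ≠ (r, i) := by grind
    refine det_zero_of_column_eq hne fun p => ?_
    rw [derivRow_Wmat_apply_of_le hU (by lia) hi, derivRow_Wmat_apply_of_le hU hr hi]
    have hiff : p.1 ≤ s ∧ p.1 ≠ r ↔ p.1 ≤ r ∧ p.1 ≠ r := by grind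
    exact if_congr hiff rfl rfl

end Wronskian

theorem deriv_det_Wmat_general {n : ℕ} (m M N : ℕ) (hN : 0 < N)
    (U : ℕ → ℝ → Matrix (Fin n) (Fin n) ℝ)
    (hUdiff : ∀ k < N, ∀ i j, ContDiff ℝ N fun t => U k t i j)
    (hUblk : ∀ k < M, BlockDiag m (U k)) (x : ℝ) :
    HasDerivAt (fun t => (Wmat m M N U t).det) (∑ l : Fin n, (WijMat m M N l l U x).det) x := by
  obtain ⟨N, rfl⟩ := Nat.exists_eq_add_one.2 hN
  have hzero (r : Fin N) (i : Fin n) :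
      (derivRow (Wmat m M (N + 1) U) (r.castSucc, i) x).det = 0 := by
    by_cases h : (i : ℕ) < m ∨ M ≤ (r : ℕ)
    · exact det_derivRow_Wmat_castSucc_eq_zero hUblk h
    · push Not at h
      exact det_derivRow_Wmat_eq_zero_of_lt_of_le hUblk h.2 h.1
  have hdet := hasDerivAt_det fun p q => (differentiable_Wmat (m := m) (M := M) hUdiff p q) x
  simpa only [Fintype.sum_prod_type, Fin.sum_univ_castSucc, hzero, Finset.sum_const_zero, zero_add,
    derivRow_Wmat_last hUblk] using hdet

/-- The derivative of `det W(U₁,…,U_M;U_{M+1},…,U_N)` equals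
`Σ_{l=1}^n det W_{l,l}(U₁,…,U_M;U_{M+1},…,U_N)`. -/
theorem deriv_det_Wmat {n : ℕ} (m M N : ℕ)
    (hm : 1 ≤ m) (hmn : m < n) (hM : 1 ≤ M) (hMN : M ≤ N)
    (U : ℕ → ℝ → Matrix (Fin n) (Fin n) ℝ)
    (hUsmooth : ∀ k < N, SmoothMat (U k)) (hUblk : ∀ k < M, BlockDiag m (U k)) :
    ∀ x : ℝ,
      deriv (fun t => (Wmat m M N U t).det) x
        = ∑ l : Fin n, (WijMat m M N l l U x).det := by
  intro x
  exact (deriv_det_Wmat_general m M N (hM.trans hMN) U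
    (fun k hk i j => (hUsmooth k hk i j).of_le (by exact_mod_cast le_top)) hUblk x).deriv

end SingularDarboux
end
end

section
/- Let U₁,…,U_N and Ψ be as in the context with det W(U₁,…,U_M;U_{M+1},…,U_N) ≠ 0, and for j, l ∈ {1,…,n} with l ≠ j let Δ_j^l denote the determinant of the matrix obtained from W_j(U₁,…,U_M;U_{M+1},…,U_N,Ψ) by differentiating, in each block of its last block-row of W-blocks (block-row r = N−1, including the appended column block), the l-th row. Then Δ_j^l = ( det W_{l,l}(U₁,…,U_M;U_{M+1},…,U_N) · det W_j(U₁,…,U_M;U_{M+1},…,U_N,Ψ) − det W_{j,l}(U₁,…,U_M;U_{M+1},…,U_N) · det W_l(U₁,…,U_M;U_{M+1},…,U_N,Ψ) ) / det W(U₁,…,U_M;U_{M+1},…,U_N). -/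
open Matrix

noncomputable section

namespace SingularDarboux

variable {n : ℕ}

/-!
Border `W` by the last column of `W_j` and by the bottom row `(0, …, 0, 1)`; the result `B` has
determinant `det W`. Substituting the bottom row of `W_i` for the last row of `B` gives `W_i`, and
substituting it for the row `(N - 1, l)` gives a matrix of determinant `det W_{i,l}`. Hence the
formula is the two-row case of Jacobi's identity for `B` as soon as differentiating the row
`(N - 1, l)` of `W_j` produces the bottom row of `W_l`. That can fail in one entry only, the corner,
and only if `M = N` and `l > m`, as `D_m` does not differentiate the rows below the `m`-th. In this
case the differentiated row still has the right entries in the columns of `W`, and the error it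
makes in `det W_l` is multiplied by `det W_{j,l} = 0`.
-/

section TwoRows

variable {ι κ R : Type*} [Fintype ι] [DecidableEq ι] [Fintype κ] [DecidableEq κ] [CommRing R]

theorem det_smul_eq_sum_det_updateRow_smul (A : Matrix ι ι R) (x : ι → R) :
    A.det • x = ∑ i, (A.updateRow i x).det • A i := by
  rw [← det_transpose A, ← mulVec_cramer, mulVec_transpose, vecMul_eq_sum]
  simp_rw [cramer_transpose_apply]

theorem det_updateRow_updateRow_of_ne_of_ne (A : Matrix ι ι R) {p q i : ι} (hip : i ≠ p)
    (hiq : i ≠ q) (y : ι → R) : ((A.updateRow q y).updateRow p (A i)).det = 0 := by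
  rw [← updateRow_ne (M := A) (b := y) hiq]
  exact det_updateRow_eq_zero hip

theorem det_updateRow_updateRow_swap (A : Matrix ι ι R) {p q : ι} (hpq : p ≠ q) (x y : ι → R) :
    ((A.updateRow q y).updateRow p x).det = -((A.updateRow q x).updateRow p y).det := by
  have hswap : (A.updateRow q y).updateRow p x =
      ((A.updateRow q x).updateRow p y).submatrix (Equiv.swap p q) id := by
    ext i k
    by_cases hp : i = p
    · simp [hp, hpq.symm]
    by_cases hq : i = q
    · simp [hq, hpq.symm]
    · simp [Equiv.swap_apply_of_ne_of_ne hp hq, hp, hq]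
  simp [hswap, det_permute, Equiv.Perm.sign_swap hpq]

/-- Jacobi's identity for the minors of the adjugate, in the case of two rows. -/
theorem det_mul_det_updateRow_updateRow (A : Matrix ι ι R) {p q : ι} (hpq : p ≠ q)
    (x y : ι → R) :
    A.det * ((A.updateRow q y).updateRow p x).det =
      (A.updateRow p x).det * (A.updateRow q y).det -
        (A.updateRow q x).det * (A.updateRow p y).det := by
  calc A.det * ((A.updateRow q y).updateRow p x).det
      = ((A.updateRow q y).updateRow p (A.det • x)).det := (det_updateRow_smul ..).symm
    _ = ∑ i, (A.updateRow i x).det * ((A.updateRow q y).updateRow p (A i)).det := by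
        rw [det_smul_eq_sum_det_updateRow_smul, ← cramer_transpose_apply, map_sum]
        simp_rw [map_smul, Finset.sum_apply, Pi.smul_apply, smul_eq_mul, cramer_transpose_apply]
    _ = (A.updateRow p x).det * ((A.updateRow q y).updateRow p (A p)).det +
          (A.updateRow q x).det * ((A.updateRow q y).updateRow p (A q)).det :=
        Fintype.sum_eq_add p q hpq fun i hi => by
          rw [det_updateRow_updateRow_of_ne_of_ne A hi.1 hi.2, mul_zero]
    _ = _ := by
        rw [det_updateRow_updateRow_swap A hpq (A q) y, updateRow_eq_self,
          updateRow_comm _ hpq.symm, updateRow_eq_self]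
        ring

theorem det_updateRow_inl_fromBlocks_zero_one (A : Matrix ι ι R) (B : Matrix ι κ R) (p : ι)
    (y : ι ⊕ κ → R) :
    ((fromBlocks A B 0 (1 : Matrix κ κ R)).updateRow (Sum.inl p) y).det =
      (A.updateRow p (y ∘ Sum.inl)).det := by
  have hblocks : (fromBlocks A B 0 (1 : Matrix κ κ R)).updateRow (Sum.inl p) y =
      fromBlocks (A.updateRow p (y ∘ Sum.inl)) (B.updateRow p (y ∘ Sum.inr)) 0 1 := by
    ext (i | i) (k | k) <;> simp [updateRow_apply]
  rw [hblocks, det_fromBlocks_zero₂₁, det_one, mul_one]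

end TwoRows

section Derivatives

variable {m : ℕ}

theorem iterate_matD_apply (r : ℕ) (U : ℝ → Matrix (Fin n) (Fin n) ℝ) (x : ℝ) (i c : Fin n) :
    matD^[r] U x i c = iteratedDeriv r (fun t => U t i c) x := by
  induction r generalizing x with
  | zero => simp
  | succ r ih =>
    rw [Function.iterate_succ_apply', iteratedDeriv_succ]
    simp [matD, ih]

theorem iterate_matDm_apply (r : ℕ) (U : ℝ → Matrix (Fin n) (Fin n) ℝ) (x : ℝ) (i c : Fin n) :
    (matDm m)^[r] U x i c =
      if (i : ℕ) < m then iteratedDeriv r (fun t => U t i c) x else U x i c := by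
  induction r generalizing x with
  | zero => simp
  | succ r ih =>
    rw [Function.iterate_succ_apply', iteratedDeriv_succ]
    by_cases hi : (i : ℕ) < m <;> simp [matDm, ih, hi]

theorem deriv_iterate_matD_apply (r : ℕ) (U : ℝ → Matrix (Fin n) (Fin n) ℝ) (x : ℝ)
    (i c : Fin n) : deriv (fun t => matD^[r] U t i c) x = matD^[r + 1] U x i c := by
  rw [Function.iterate_succ_apply']
  rfl

namespace BlockDiag

variable {U : ℝ → Matrix (Fin n) (Fin n) ℝ}

theorem iterate_matD_apply_eq_zero (hU : BlockDiag m U) {r : ℕ} (hr : r ≠ 0) (x : ℝ)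
    {i c : Fin n} (hic : m ≤ (i : ℕ) ∨ m ≤ (c : ℕ)) : matD^[r] U x i c = 0 := by
  simp [iterate_matD_apply, hU _ i c hic, iteratedDeriv_const, hr]

theorem iterate_matDm (hU : BlockDiag m U) (r : ℕ) : BlockDiag m ((matDm m)^[r] U) := by
  intro x i c hic
  rw [iterate_matDm_apply]
  by_cases hi : (i : ℕ) < m
  · have hne : i ≠ c := by grind
    simp [hi, hne, hU _ i c hic]
  · rw [if_neg hi, hU x i c hic]

end BlockDiag

end Derivatives

section LastRow

variable {m M N : ℕ}

theorem deriv_Wblock_s4 {k : ℕ} (hM : 1 ≤ M) (hMN : M ≤ N) (hk : k < N)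
    {U : ℝ → Matrix (Fin n) (Fin n) ℝ} (hU : k < M → BlockDiag m U) (l c : Fin n) (x : ℝ) :
    deriv (fun t => Wblock m M (N - 1) k U t l c) x = Wrow m M N k U l x c := by
  have hN : N - 1 + 1 = N := by omega
  by_cases hkM : k < M
  · by_cases hr : N - 1 ≤ k
    · have hWrow : Wrow m M N k U l x c = matD^[N] U x l c := by simp [Wrow, hkM]
      have hWblock t : Wblock m M (N - 1) k U t l c = (matDm m)^[N - 1] U t l c := by
        simp [Wblock, hkM, hr]
      simp_rw [hWrow, hWblock]
      by_cases hl : (l : ℕ) < m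
      · simp_rw [iterate_matDm_apply, if_pos hl, ← iterate_matD_apply, deriv_iterate_matD_apply, hN]
      · have hlc : m ≤ (l : ℕ) ∨ m ≤ (c : ℕ) := by omega
        rw [(hU hkM).iterate_matD_apply_eq_zero (by omega) x hlc]
        simp [(hU hkM).iterate_matDm _ _ _ _ hlc]
    · simp [Wblock, Wrow, hkM, hr, deriv_iterate_matD_apply, hN, -Function.iterate_succ]
  · have hr : ¬ N - 1 < M := by omega
    have hNM : N - 1 - M + 1 = N - M := by omega
    simp [Wblock, Wrow, hkM, hr, deriv_iterate_matD_apply, hNM, -Function.iterate_succ]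

theorem deriv_Wcol (hM : 1 ≤ M) (hMN : M ≤ N) (Ψ : ℝ → Fin n → ℝ) {l : Fin n}
    (h : M < N ∨ (l : ℕ) < m) (x : ℝ) :
    deriv (fun t => Wcol m M (N - 1) Ψ t l) x = vecD^[N - M] ((vecDm m)^[M] Ψ) x l := by
  rcases hMN.lt_or_eq with hlt | rfl
  · have hNM : N - M = N - 1 - M + 1 := by omega
    rw [hNM, Function.iterate_succ_apply']
    simp [Wcol, show ¬ N - 1 < M by omega, vecD]
  · obtain ⟨K, rfl⟩ : ∃ K, M = K + 1 := ⟨M - 1, by omega⟩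
    have hl : (l : ℕ) < m := by omega
    simp only [Wcol, Nat.add_sub_cancel, Nat.lt_succ_self, if_true, Nat.sub_self,
      Function.iterate_zero, id, Function.iterate_succ_apply']
    simp [vecDm, hl]

end LastRow

section Bordered

/-- The matrix `W` bordered by the last column of the matrices `W_j` on the right and by the row
`(0, …, 0, 1)` at the bottom. -/
def Wbordered (m M N : ℕ) (U : ℕ → ℝ → Matrix (Fin n) (Fin n) ℝ) (Ψ : ℝ → Fin n → ℝ) (x : ℝ) :
    Matrix ((Fin N × Fin n) ⊕ Unit) ((Fin N × Fin n) ⊕ Unit) ℝ :=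
  fromBlocks (Wmat m M N U x) (replicateCol Unit fun p => Wcol m M p.1 Ψ x p.2) 0 1

variable {m M N : ℕ} (U : ℕ → ℝ → Matrix (Fin n) (Fin n) ℝ) (Ψ : ℝ → Fin n → ℝ) (x : ℝ)

theorem det_Wbordered : (Wbordered m M N U Ψ x).det = (Wmat m M N U x).det := by
  rw [Wbordered, det_fromBlocks_zero₂₁, det_one, mul_one]

theorem updateRow_inr_Wbordered (i : Fin n) :
    (Wbordered m M N U Ψ x).updateRow (Sum.inr ()) (WjMat m M N i U Ψ x (Sum.inr ())) =
      WjMat m M N i U Ψ x := by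
  ext (p | p) q
  · rw [updateRow_ne Sum.inl_ne_inr]
    rcases q with q | q <;> rfl
  · rw [updateRow_self]

theorem WijMat_eq_updateRow (hN : 0 < N) (i l : Fin n) :
    WijMat m M N i l U x = (Wmat m M N U x).updateRow (⟨N - 1, by omega⟩, l)
      fun q => Wrow m M N q.1 (U q.1) i x q.2 := by
  ext p q
  simp [WijMat, Wmat, updateRow_apply, Prod.ext_iff, Fin.ext_iff]

theorem det_updateRow_inl_Wbordered (hN : 0 < N) {i l : Fin n} {y : (Fin N × Fin n) ⊕ Unit → ℝ}
    (hy : ∀ q, y (Sum.inl q) = Wrow m M N q.1 (U q.1) i x q.2) :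
    ((Wbordered m M N U Ψ x).updateRow (Sum.inl (⟨N - 1, by omega⟩, l)) y).det =
      (WijMat m M N i l U x).det := by
  rw [Wbordered, det_updateRow_inl_fromBlocks_zero_one, WijMat_eq_updateRow U x hN i l]
  congr 2
  exact funext hy

end Bordered

section Vanishing

variable {m M N : ℕ} {U : ℕ → ℝ → Matrix (Fin n) (Fin n) ℝ}

theorem Wblock_apply_of_le_col {r k : ℕ} (hk : k < M) {V : ℝ → Matrix (Fin n) (Fin n) ℝ}
    (hV : BlockDiag m V) (x : ℝ) (i : Fin n) {c : Fin n} (hc : m ≤ (c : ℕ)) :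
    Wblock m M r k V x i c = if r ≤ k ∧ i = c then 1 else 0 := by
  by_cases hr : r ≤ k
  · simp [Wblock, hk, hr, hV.iterate_matDm r x i c (Or.inr hc)]
  · simp [Wblock, hk, hr, hV.iterate_matD_apply_eq_zero (by omega : r ≠ 0) x (Or.inr hc)]

theorem WijMat_apply_of_le_col (hU : ∀ k < N, BlockDiag m (U k)) (j : Fin n) {l : Fin n}
    (hl : m ≤ (l : ℕ)) (x : ℝ) (p : Fin N × Fin n) (k : Fin N) :
    WijMat m N N j l U x p (k, l) =
      if (p.1 : ℕ) ≠ N - 1 ∧ p.1 ≤ k ∧ p.2 = l then 1 else 0 := by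
  have hV := hU k k.2
  by_cases hp : (p.1 : ℕ) = N - 1 ∧ p.2 = l
  · simp [WijMat, Wrow, hp, hV.iterate_matD_apply_eq_zero (by omega : N ≠ 0) x (Or.inr hl)]
  · simp only [WijMat, of_apply, if_neg hp, Wblock_apply_of_le_col k.2 hV x p.2 hl]
    grind

theorem det_WijMat_eq_zero_of_le (hN : 0 < N) (hU : ∀ k < N, BlockDiag m (U k)) (j : Fin n)
    {l : Fin n} (hl : m ≤ (l : ℕ)) (x : ℝ) : (WijMat m N N j l U x).det = 0 := by
  obtain rfl | hN1 := (Nat.succ_le_of_lt hN).eq_or_lt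
  · refine det_eq_zero_of_column_eq_zero (0, l) fun p => ?_
    simp [WijMat_apply_of_le_col hU j hl]
  · -- These two columns of `W` differ only in the row `(N - 1, l)`, the one that is replaced.
    refine det_zero_of_column_eq (i := (⟨N - 1, by omega⟩, l)) (j := (⟨N - 2, by omega⟩, l))
      (by grind) fun p => ?_
    simp only [WijMat_apply_of_le_col hU j hl, Fin.le_def]
    grind

end Vanishing

theorem Delta_jl_formula_general {m M N : ℕ} (hM : 1 ≤ M) (hMN : M ≤ N)
    {U : ℕ → ℝ → Matrix (Fin n) (Fin n) ℝ} {Ψ : ℝ → Fin n → ℝ}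
    (_hUsmooth : ∀ k < N, SmoothMat (U k)) (hUblk : ∀ k < M, BlockDiag m (U k))
    (_hΨ : SmoothVec Ψ) (j l : Fin n) (x : ℝ) :
    ((WjMat m M N j U Ψ x).updateRow (Sum.inl (⟨N - 1, by omega⟩, l)) (fun q =>
        deriv (fun t => WjMat m M N j U Ψ t (Sum.inl (⟨N - 1, by omega⟩, l)) q) x)).det *
        (Wmat m M N U x).det =
      (WijMat m M N l l U x).det * (WjMat m M N j U Ψ x).det -
        (WijMat m M N j l U x).det * (WjMat m M N l U Ψ x).det := by
  have hN : 0 < N := by omega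
  let row (i : Fin n) := WjMat m M N i U Ψ x (Sum.inr ())
  set drow := fun q => deriv (fun t => WjMat m M N j U Ψ t (Sum.inl (⟨N - 1, by omega⟩, l)) q) x
  have hdrow q : drow (Sum.inl q) = row l (Sum.inl q) :=
    deriv_Wblock_s4 hM hMN q.1.2 (hUblk _) l q.2 x
  have herror : (WijMat m M N j l U x).det *
      ((Wbordered m M N U Ψ x).updateRow (Sum.inr ()) drow).det =
      (WijMat m M N j l U x).det * (WjMat m M N l U Ψ x).det := by
    by_cases h : M < N ∨ (l : ℕ) < m
    · have hcorner : drow (Sum.inr ()) = row l (Sum.inr ()) := deriv_Wcol hM hMN Ψ h x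
      rw [← updateRow_inr_Wbordered U Ψ x l]
      congr 3
      exact funext (Sum.rec hdrow fun _ => hcorner)
    · obtain rfl : M = N := by omega
      rw [det_WijMat_eq_zero_of_le hN hUblk j (by omega), zero_mul, zero_mul]
  rw [← herror, ← det_Wbordered U Ψ x, mul_comm, ← updateRow_inr_Wbordered U Ψ x j,
    det_mul_det_updateRow_updateRow _ Sum.inl_ne_inr,
    det_updateRow_inl_Wbordered U Ψ x hN hdrow,
    det_updateRow_inl_Wbordered U Ψ x hN (y := row j) fun _ => rfl]
  ring

/-- The formula for `Δ_j^l`, the determinant of `W_j(U₁,…,U_M;U_{M+1},…,U_N,Ψ)`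
with the `l`-th row of its last block-row of `W`-blocks (block-row `r = N-1`,
including the appended column block) differentiated. -/
theorem Delta_jl_formula {n : ℕ} (m M N : ℕ)
    (hm : 1 ≤ m) (hmn : m < n) (hM : 1 ≤ M) (hMN : M ≤ N)
    (U : ℕ → ℝ → Matrix (Fin n) (Fin n) ℝ) (Ψ : ℝ → Fin n → ℝ)
    (hUsmooth : ∀ k < N, SmoothMat (U k)) (hUblk : ∀ k < M, BlockDiag m (U k))
    (hΨ : SmoothVec Ψ)
    (j l : Fin n) (hlj : l ≠ j)
    (Δ : ℝ → ℝ)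
    (hΔ : ∀ x, Δ x =
      ((WjMat m M N j U Ψ x).updateRow (Sum.inl (⟨N - 1, by omega⟩, l))
        (fun q =>
          deriv (fun t => WjMat m M N j U Ψ t (Sum.inl (⟨N - 1, by omega⟩, l)) q) x)).det) :
    ∀ x : ℝ, (Wmat m M N U x).det ≠ 0 →
      Δ x = ((WijMat m M N l l U x).det * (WjMat m M N j U Ψ x).det
              - (WijMat m M N j l U x).det * (WjMat m M N l U Ψ x).det)
            / (Wmat m M N U x).det := by
  intro x hx
  rw [hΔ x, eq_div_iff hx, Delta_jl_formula_general hM hMN hUsmooth hUblk hΨ]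

end SingularDarboux
end
end
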